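/- Let G be a finite r-regular graph with girth g, equipped with a random label assignment with probabilities (p₀,p), and let i ≥ 1 with 2i < g−3 and 2(i+2) < g−2. Then the quantities w, b, q, s, t satisfy the recurrences: w_i = w_{i−1}·(1 − p·s_{i−1}/w_{i−1})^r; b_i = b_{i−1}·(1−p)·(1 − r·p·t_{i−1}/((r−1)·b_{i−1}))^{r−1} + r·p·s_{i−1}·(1 − p·s_{i−1}/w_{i−1})^{r−1}; q_i = q_{i−1}·(1 − p·s_{i−1}/w_{i−1})^{2r−2}; s_i = s_{i−1}·(1−p)·(1 − p·s_{i−1}/w_{i−1})^{r−1}·(1 − r·p·t_{i−1}/((r−1)·b_{i−1}))^{r−2} + ((r−1)·p·q_{i−1}·s_{i−1}/w_{i−1})·(1 − p·s_{i−1}/w_{i−1})^{2r−3}; t_i = t_{i−1}·(1−p)²·(1 − r·p·t_{i−1}/((r−1)·b_{i−1}))^{2r−4} + 2·s_{i−1}·(1−p)·(1 − r·p·t_{i−1}/((r−1)·b_{i−1}))^{r−2}·((r−1)·p·s_{i−1}/w_{i−1})·(1 − p·s_{i−1}/w_{i−1})^{r−2} + q_{i−1}·((r−1)²·p²·s_{i−1}²/w_{i−1}²)·(1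 − p·s_{i−1}/w_{i−1})^{2r−4}. -/

import Mathlib

open MeasureTheory ProbabilityTheory Filter Set

namespace InducedForest

variable {V : Type*}

/-- Label `i` is *relevant* for vertex `v` (w.r.t. the label assignment `S`):
either `i = 0` and `0 ∈ S v`, or `i ∈ S v`, no `j < i` is relevant for `v`, and
there is a unique neighbour of `v` having a relevant label strictly smaller than `i`. -/
def Relevant (G : SimpleGraph V) (S : V → Set ℕ) (i : ℕ) : V → Prop :=
  Nat.strongRecOn i (fun i ih v =>
    (i = 0 ∧ 0 ∈ S v) ∨
    (i ∈ S v ∧ (∀ j, (h : j < i) → ¬ ih j h v) ∧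
      (∃! u, G.Adj v u ∧ ∃ j, ∃ h : j < i, ih j h u)))

/-- `v` has some relevant label `≤ l`, i.e. `v ∈ R_{≤ l}`. -/
def RelevantLe (G : SimpleGraph V) (S : V → Set ℕ) (l : ℕ) (v : V) : Prop :=
  ∃ i ≤ l, Relevant G S i v

inductive Colour | white | blue | orange | purple
deriving DecidableEq

open Classical in
/-- The colour of `u` at time `l`. -/
noncomputable def colourAt (G : SimpleGraph V) (S : V → Set ℕ) (l : ℕ) (u : V) : Colour :=
  if RelevantLe G S l u then Colour.purple
  else if ∀ v, G.Adj u v → ¬ RelevantLe G S l v then Colour.white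
  else if ∃! v, G.Adj u v ∧ RelevantLe G S l v then Colour.blue
  else Colour.orange

/-- The set `W_l` of white vertices at time `l`. -/
def White (G : SimpleGraph V) (S : V → Set ℕ) (l : ℕ) : Set V :=
  {u | ¬ RelevantLe G S l u ∧ ∀ v, G.Adj u v → ¬ RelevantLe G S l v}

/-- The set `B_l` of blue vertices at time `l`. -/
def Blue (G : SimpleGraph V) (S : V → Set ℕ) (l : ℕ) : Set V :=
  {u | ¬ RelevantLe G S l u ∧ ∃! v, G.Adj u v ∧ RelevantLe G S l v}
/-- The label assignment determined by a sample point `ω`. -/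
def labels (ω : V → ℕ → Bool) : V → Set ℕ := fun v => {i | ω v i = true}

/-- `μ` is the random label assignment with probabilities `(p₀, p)`: the events
`i ∈ S(v)` are mutually independent, and each has probability `p₀` if `i = 0`
and `p` if `i ≥ 1`. -/
def IsLabelMeasure (μ : Measure (V → ℕ → Bool)) (p₀ p : ℝ) : Prop :=
  IsProbabilityMeasure μ ∧
  iIndepSet (fun q : V × ℕ => {ω : V → ℕ → Bool | ω q.1 q.2 = true}) μ ∧
  ∀ (v : V) (i : ℕ), μ {ω | ω v i = true} = ENNReal.ofReal (if i = 0 then p₀ else p)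

/-- Event that `u` is white at time `l`. -/
def WEv (G : SimpleGraph V) (l : ℕ) (u : V) : Set (V → ℕ → Bool) :=
  {ω | u ∈ White G (labels ω) l}

/-- Event that `u` is blue at time `l`. -/
def BEv (G : SimpleGraph V) (l : ℕ) (u : V) : Set (V → ℕ → Bool) :=
  {ω | u ∈ Blue G (labels ω) l}

/-- Event that `u` has relevant label `i`, i.e. `u ∈ R_i`. -/
def REv (G : SimpleGraph V) (i : ℕ) (u : V) : Set (V → ℕ → Bool) :=
  {ω | Relevant G (labels ω) i u}

/-- Event that `u` has a relevant label `≤ l`, i.e. `u ∈ R_{≤ l}`. -/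
def RLeEv (G : SimpleGraph V) (l : ℕ) (u : V) : Set (V → ℕ → Bool) :=
  {ω | RelevantLe G (labels ω) l u}

/-- `G` is `r`-regular. -/
def IsRegular (G : SimpleGraph V) (r : ℕ) : Prop :=
  ∀ v : V, (G.neighborSet v).ncard = r

section Helpers

open scoped Classical

/-- Branch relevance: `v` is relevant by time `j` in the branch at `v` away from `u`. -/
def Rho (G : SimpleGraph V) (ω : V → ℕ → Bool) : ℕ → V → V → Prop
  | 0, _, v => ω v 0 = true
  | j + 1, u, v => Rho G ω j u v ∨
      (ω v (j + 1) = true ∧ ∃! x, (G.Adj v x ∧ x ≠ u) ∧ Rho G ω j v x)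

/-- `u` is not relevant at time `j` and `v` is (branch version). -/
def Kap (G : SimpleGraph V) (ω : V → ℕ → Bool) : ℕ → V → V → Prop
  | 0, u, v => ω u 0 = false ∧ ω v 0 = true
  | j + 1, u, v => (Kap G ω j u v ∧ ω u (j + 1) = false) ∨
      (ω u 0 = false ∧ ¬ Rho G ω j u v ∧ Rho G ω (j + 1) u v)

/-- `v` is non-relevant at time `j` for the process where only neighbours in `N` count. -/
def NR (G : SimpleGraph V) (ω : V → ℕ → Bool) (N : Set V) : ℕ → V → Prop
  | 0, v => ω v 0 = false
  | j + 1, v => NR G ω N j v ∧ ¬ (ω v (j + 1) = true ∧ ∃! x, x ∈ N ∧ Rho G ω j v x)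

/-- White, relative to `N`. -/
def EE (G : SimpleGraph V) (ω : V → ℕ → Bool) (N : Set V) (j : ℕ) (v : V) : Prop :=
  ω v 0 = false ∧ ∀ x ∈ N, ¬ Rho G ω j v x

/-- Blue, relative to `N`. -/
def DD (G : SimpleGraph V) (ω : V → ℕ → Bool) (N : Set V) (j : ℕ) (v : V) : Prop :=
  ∃ x ∈ N, Kap G ω j v x ∧ ∀ y ∈ N, y ≠ x → ¬ Rho G ω j v y

/-- Neighbours of `v` other than `u`. -/
def ch (G : SimpleGraph V) (u v : V) : Set V := {x | G.Adj v x ∧ x ≠ u}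

lemma kap_rho (G : SimpleGraph V) (ω : V → ℕ → Bool) (j : ℕ) (u v : V) :
    Kap G ω j u v → Rho G ω j u v := by
  induction j with
  | zero => exact fun h => h.2
  | succ j ih =>
    rintro (h | h)
    · exact Or.inl (ih h.1)
    · exact h.2.2

lemma nr_white (G : SimpleGraph V) (ω : V → ℕ → Bool) (N : Set V) (j : ℕ) (v : V)
    (h : ∀ x ∈ N, ¬ Rho G ω j v x) : NR G ω N j v ↔ ω v 0 = false := by
  induction j with
  | zero => exact Iff.rfl
  | succ j ih =>
    have h' : ∀ x ∈ N, ¬ Rho G ω j v x := fun x hx hr => h x hx (Or.inl hr)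
    rw [← ih h']
    constructor
    · exact fun h => h.1
    · refine fun h => ⟨h, ?_⟩
      rintro ⟨_, x, ⟨hx, hr⟩, _⟩
      exact h' x hx hr

lemma nr_kap (G : SimpleGraph V) (ω : V → ℕ → Bool) (N : Set V) (j : ℕ) (v x : V)
    (hx : x ∈ N) (hr : Rho G ω j v x)
    (h : ∀ y ∈ N, y ≠ x → ¬ Rho G ω j v y) : NR G ω N j v ↔ Kap G ω j v x := by
  induction j with
  | zero => exact ⟨fun h => ⟨h, hr⟩, fun h => h.1⟩
  | succ j ih =>
    have h' : ∀ y ∈ N, y ≠ x → ¬ Rho G ω j v y := fun y hy hyx hr => h y hy hyx (Or.inl hr)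
    by_cases hj : Rho G ω j v x
    · have hu : ∃! y, y ∈ N ∧ Rho G ω j v y := by
        refine ⟨x, ⟨hx, hj⟩, ?_⟩
        rintro y ⟨hy, hyr⟩
        by_contra hne
        exact h' y hy hne hyr
      have := ih hj h'
      simp only [NR, Kap, this, hu, hj]
      simp
    · have hn : ∀ y ∈ N, ¬ Rho G ω j v y := by
        intro y hy
        by_cases hyx : y = x
        · rw [hyx]; exact hj
        · exact h' y hy hyx
      have h1 := nr_white G ω N j v hn
      have hu : ¬ ∃! y, y ∈ N ∧ Rho G ω j v y := by
        rintro ⟨y, ⟨hy, hyr⟩, _⟩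
        exact hn y hy hyr
      have hk : ¬ Kap G ω j v x := fun hk => hj (kap_rho G ω j v x hk)
      have e1 : NR G ω N (j+1) v ↔ ω v 0 = false := by
        simp only [NR, h1, hu]; simp
      rw [e1]
      show _ ↔ (Kap G ω j v x ∧ ω v (j + 1) = false) ∨
        (ω v 0 = false ∧ ¬ Rho G ω j v x ∧ Rho G ω (j + 1) v x)
      tauto

lemma ee_iff (G : SimpleGraph V) (ω : V → ℕ → Bool) (N : Set V) (j : ℕ) (v : V) :
    EE G ω N j v ↔ NR G ω N j v ∧ ∀ x ∈ N, ¬ Rho G ω j v x := by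
  constructor
  · rintro ⟨h, h2⟩
    exact ⟨(nr_white G ω N j v h2).2 h, h2⟩
  · rintro ⟨h, h2⟩
    exact ⟨(nr_white G ω N j v h2).1 h, h2⟩

lemma dd_iff (G : SimpleGraph V) (ω : V → ℕ → Bool) (N : Set V) (j : ℕ) (v : V) :
    DD G ω N j v ↔ NR G ω N j v ∧ ∃! x, x ∈ N ∧ Rho G ω j v x := by
  constructor
  · rintro ⟨x, hx, hk, h2⟩
    have hr := kap_rho G ω j v x hk
    refine ⟨(nr_kap G ω N j v x hx hr h2).2 hk, x, ⟨hx, hr⟩, ?_⟩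
    rintro y ⟨hy, hyr⟩
    by_contra hne
    exact h2 y hy hne hyr
  · rintro ⟨h, x, ⟨hx, hr⟩, h2⟩
    have h3 : ∀ y ∈ N, y ≠ x → ¬ Rho G ω j v y := fun y hy hne hyr => hne (h2 y ⟨hy, hyr⟩)
    exact ⟨x, hx, (nr_kap G ω N j v x hx hr h3).1 h, h3⟩

lemma not_rho_iff (G : SimpleGraph V) (ω : V → ℕ → Bool) (j : ℕ) (u v : V) :
    ¬ Rho G ω j u v ↔ NR G ω (ch G u v) j v := by
  induction j with
  | zero => simp [Rho, NR]
  | succ j ih =>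
    rw [NR, ← ih, Rho, not_or]
    rfl

lemma relevant_succ (G : SimpleGraph V) (S : V → Set ℕ) (i : ℕ) (v : V) :
    Relevant G S i v ↔ (i = 0 ∧ 0 ∈ S v) ∨
    (i ∈ S v ∧ (∀ j, j < i → ¬ Relevant G S j v) ∧
      (∃! u, G.Adj v u ∧ ∃ j, ∃ _ : j < i, Relevant G S j u)) := by
  unfold Relevant
  rw [Nat.strongRecOn_eq]

lemma rle_zero (G : SimpleGraph V) (ω : V → ℕ → Bool) (v : V) :
    RelevantLe G (labels ω) 0 v ↔ ω v 0 = true := by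
  unfold RelevantLe
  constructor
  · rintro ⟨i, hi, h⟩
    obtain rfl : i = 0 := by omega
    rw [relevant_succ] at h
    rcases h with h | h
    · exact h.2
    · exact h.1
  · intro h
    exact ⟨0, le_rfl, (relevant_succ _ _ _ _).2 (Or.inl ⟨rfl, h⟩)⟩

lemma rle_succ (G : SimpleGraph V) (ω : V → ℕ → Bool) (j : ℕ) (v : V) :
    RelevantLe G (labels ω) (j + 1) v ↔ RelevantLe G (labels ω) j v ∨
      (ω v (j + 1) = true ∧ ∃! x, G.Adj v x ∧ RelevantLe G (labels ω) j x) := by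
  have key : ∀ x, (∃ k, ∃ _ : k < j + 1, Relevant G (labels ω) k x) ↔
      RelevantLe G (labels ω) j x := by
    intro x
    constructor
    · rintro ⟨k, hk, h⟩; exact ⟨k, by omega, h⟩
    · rintro ⟨k, hk, h⟩; exact ⟨k, by omega, h⟩
  constructor
  · rintro ⟨i, hi, h⟩
    by_cases hij : i ≤ j
    · exact Or.inl ⟨i, hij, h⟩
    · obtain rfl : i = j + 1 := by omega
      right
      rw [relevant_succ] at h
      rcases h with h | h
      · omega
      · simp only [key] at h
        exact ⟨h.1, h.2.2⟩
  · rintro (⟨i, hi, h⟩ | ⟨h1, h2⟩)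
    · exact ⟨i, by omega, h⟩
    · by_cases hv : RelevantLe G (labels ω) j v
      · obtain ⟨i, hi, h⟩ := hv
        exact ⟨i, by omega, h⟩
      · refine ⟨j + 1, le_rfl, (relevant_succ _ _ _ _).2 (Or.inr ⟨h1, ?_, ?_⟩)⟩
        · intro k hk h
          exact hv ⟨k, by omega, h⟩
        · simp only [key]; exact h2

lemma rle_rho (G : SimpleGraph V) (ω : V → ℕ → Bool) (j : ℕ) :
    ∀ u v, G.Adj u v → ¬ RelevantLe G (labels ω) j u →
      (RelevantLe G (labels ω) j v ↔ Rho G ω j u v) := by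
  induction j with
  | zero => intro u v _ _; exact rle_zero G ω v
  | succ j ih =>
    intro u v huv hu
    have hu' : ¬ RelevantLe G (labels ω) j u := fun h => hu ((rle_succ _ _ _ _).2 (Or.inl h))
    rw [rle_succ, Rho, ← ih u v huv hu']
    by_cases hv : RelevantLe G (labels ω) j v
    · simp [hv]
    · have : ∀ x, (G.Adj v x ∧ RelevantLe G (labels ω) j x) ↔
          ((G.Adj v x ∧ x ≠ u) ∧ Rho G ω j v x) := by
        intro x
        constructor
        · rintro ⟨h1, h2⟩
          refine ⟨⟨h1, ?_⟩, (ih v x h1 hv).1 h2⟩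
          rintro rfl
          exact hu' h2
        · rintro ⟨⟨h1, _⟩, h2⟩
          exact ⟨h1, (ih v x h1 hv).2 h2⟩
      simp only [this]

lemma not_rle_iff (G : SimpleGraph V) (ω : V → ℕ → Bool) (j : ℕ) (v : V) :
    ¬ RelevantLe G (labels ω) j v ↔ NR G ω (G.neighborSet v) j v := by
  induction j with
  | zero => rw [rle_zero]; simp [NR]
  | succ j ih =>
    rw [NR, ← ih, rle_succ, not_or]
    by_cases hv : RelevantLe G (labels ω) j v
    · simp [hv]
    · have : ∀ x, (G.Adj v x ∧ RelevantLe G (labels ω) j x) ↔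
          (x ∈ G.neighborSet v ∧ Rho G ω j v x) := by
        intro x
        constructor
        · rintro ⟨h1, h2⟩
          exact ⟨h1, (rle_rho G ω j v x h1 hv).1 h2⟩
        · rintro ⟨h1, h2⟩
          exact ⟨h1, (rle_rho G ω j v x h1 hv).2 h2⟩
      simp only [this]

lemma white_iff (G : SimpleGraph V) (ω : V → ℕ → Bool) (j : ℕ) (v : V) :
    v ∈ White G (labels ω) j ↔ EE G ω (G.neighborSet v) j v := by
  rw [ee_iff, ← not_rle_iff]
  refine and_congr_right fun hv => ?_
  refine forall_congr' fun x => ?_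
  refine imp_congr_right fun h => ?_
  rw [rle_rho G ω j v x h hv]

lemma blue_iff (G : SimpleGraph V) (ω : V → ℕ → Bool) (j : ℕ) (v : V) :
    v ∈ Blue G (labels ω) j ↔ DD G ω (G.neighborSet v) j v := by
  rw [dd_iff, ← not_rle_iff]
  refine and_congr_right fun hv => ?_
  refine existsUnique_congr fun x => ?_
  refine and_congr_right fun h => ?_
  rw [rle_rho G ω j v x h hv]

lemma nr_erase (G : SimpleGraph V) (ω : V → ℕ → Bool) (j : ℕ) (u v : V)
    (h : ¬ Rho G ω j v u) :
    NR G ω (G.neighborSet v) j v ↔ NR G ω (ch G u v) j v := by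
  induction j with
  | zero => exact Iff.rfl
  | succ j ih =>
    have h' : ¬ Rho G ω j v u := fun hh => h (Or.inl hh)
    rw [NR, NR, ih h']
    have : ∀ x, (x ∈ G.neighborSet v ∧ Rho G ω j v x) ↔ (x ∈ ch G u v ∧ Rho G ω j v x) := by
      intro x
      constructor
      · rintro ⟨h1, h2⟩
        refine ⟨⟨h1, ?_⟩, h2⟩
        rintro rfl
        exact h' h2
      · rintro ⟨h1, h2⟩
        exact ⟨h1.1, h2⟩
    simp only [this]

lemma not_rle_pair (G : SimpleGraph V) (ω : V → ℕ → Bool) (j : ℕ) (u v : V)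
    (huv : G.Adj u v) :
    (¬ RelevantLe G (labels ω) j u ∧ ¬ RelevantLe G (labels ω) j v) ↔
    (¬ Rho G ω j u v ∧ ¬ Rho G ω j v u) := by
  constructor
  · rintro ⟨hu, hv⟩
    rw [← rle_rho G ω j u v huv hu, ← rle_rho G ω j v u huv.symm hv]
    exact ⟨hv, hu⟩
  · rintro ⟨h1, h2⟩
    rw [not_rle_iff, not_rle_iff, nr_erase G ω j u v h2, nr_erase G ω j v u h1,
      ← not_rho_iff, ← not_rho_iff]
    exact ⟨h2, h1⟩

lemma ee_erase (G : SimpleGraph V) (ω : V → ℕ → Bool) (j : ℕ) (u v : V)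
    (h : ¬ Rho G ω j v u) :
    EE G ω (G.neighborSet v) j v ↔ EE G ω (ch G u v) j v := by
  refine and_congr_right fun _ => ⟨fun hh x hx => hh x hx.1, fun hh x hx => ?_⟩
  by_cases hxu : x = u
  · rw [hxu]; exact h
  · exact hh x ⟨hx, hxu⟩

lemma dd_erase (G : SimpleGraph V) (ω : V → ℕ → Bool) (j : ℕ) (u v : V)
    (h : ¬ Rho G ω j v u) :
    DD G ω (G.neighborSet v) j v ↔ DD G ω (ch G u v) j v := by
  rw [dd_iff, dd_iff, nr_erase G ω j u v h]
  refine and_congr_right fun _ => existsUnique_congr fun x => ?_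
  constructor
  · rintro ⟨h1, h2⟩
    refine ⟨⟨h1, ?_⟩, h2⟩
    rintro rfl
    exact h h2
  · rintro ⟨h1, h2⟩
    exact ⟨h1.1, h2⟩

lemma ee_not_rho (G : SimpleGraph V) (ω : V → ℕ → Bool) (j : ℕ) (u v : V)
    (h : EE G ω (ch G u v) j v) : ¬ Rho G ω j u v :=
  (not_rho_iff G ω j u v).2 ((ee_iff G ω _ j v).1 h).1

lemma dd_not_rho (G : SimpleGraph V) (ω : V → ℕ → Bool) (j : ℕ) (u v : V)
    (h : DD G ω (ch G u v) j v) : ¬ Rho G ω j u v :=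
  (not_rho_iff G ω j u v).2 ((dd_iff G ω _ j v).1 h).1

lemma ww_iff (G : SimpleGraph V) (ω : V → ℕ → Bool) (j : ℕ) (u v : V) (huv : G.Adj u v) :
    (u ∈ White G (labels ω) j ∧ v ∈ White G (labels ω) j) ↔
      (EE G ω (ch G v u) j u ∧ EE G ω (ch G u v) j v) := by
  constructor
  · rintro ⟨hu, hv⟩
    obtain ⟨h1, h2⟩ := (not_rle_pair G ω j u v huv).1 ⟨hu.1, hv.1⟩
    exact ⟨(ee_erase G ω j v u h1).1 ((white_iff _ _ _ _).1 hu),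
      (ee_erase G ω j u v h2).1 ((white_iff _ _ _ _).1 hv)⟩
  · rintro ⟨hu, hv⟩
    have h1 := ee_not_rho G ω j v u hu
    have h2 := ee_not_rho G ω j u v hv
    exact ⟨(white_iff _ _ _ _).2 ((ee_erase G ω j v u h2).2 hu),
      (white_iff _ _ _ _).2 ((ee_erase G ω j u v h1).2 hv)⟩

lemma bw_iff (G : SimpleGraph V) (ω : V → ℕ → Bool) (j : ℕ) (u v : V) (huv : G.Adj u v) :
    (u ∈ Blue G (labels ω) j ∧ v ∈ White G (labels ω) j) ↔
      (DD G ω (ch G v u) j u ∧ EE G ω (ch G u v) j v) := by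
  constructor
  · rintro ⟨hu, hv⟩
    obtain ⟨h1, h2⟩ := (not_rle_pair G ω j u v huv).1 ⟨hu.1, hv.1⟩
    exact ⟨(dd_erase G ω j v u h1).1 ((blue_iff _ _ _ _).1 hu),
      (ee_erase G ω j u v h2).1 ((white_iff _ _ _ _).1 hv)⟩
  · rintro ⟨hu, hv⟩
    have h1 := dd_not_rho G ω j v u hu
    have h2 := ee_not_rho G ω j u v hv
    exact ⟨(blue_iff _ _ _ _).2 ((dd_erase G ω j v u h2).2 hu),
      (white_iff _ _ _ _).2 ((ee_erase G ω j u v h1).2 hv)⟩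

lemma bb_iff (G : SimpleGraph V) (ω : V → ℕ → Bool) (j : ℕ) (u v : V) (huv : G.Adj u v) :
    (u ∈ Blue G (labels ω) j ∧ v ∈ Blue G (labels ω) j) ↔
      (DD G ω (ch G v u) j u ∧ DD G ω (ch G u v) j v) := by
  constructor
  · rintro ⟨hu, hv⟩
    obtain ⟨h1, h2⟩ := (not_rle_pair G ω j u v huv).1 ⟨hu.1, hv.1⟩
    exact ⟨(dd_erase G ω j v u h1).1 ((blue_iff _ _ _ _).1 hu),
      (dd_erase G ω j u v h2).1 ((blue_iff _ _ _ _).1 hv)⟩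
  · rintro ⟨hu, hv⟩
    have h1 := dd_not_rho G ω j v u hu
    have h2 := dd_not_rho G ω j u v hv
    exact ⟨(blue_iff _ _ _ _).2 ((dd_erase G ω j v u h2).2 hu),
      (blue_iff _ _ _ _).2 ((dd_erase G ω j u v h1).2 hv)⟩

/-- Vertices on which the branch at `v` away from `u` depends, up to depth `j`. -/
def BS (G : SimpleGraph V) : ℕ → V → V → Set V
  | 0, _, v => {v}
  | j + 1, u, v => {v} ∪ ⋃ x ∈ ch G u v, BS G j v x

lemma bs_succ (G : SimpleGraph V) (j : ℕ) (u v : V) : BS G j u v ⊆ BS G (j + 1) u v := by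
  induction j generalizing u v with
  | zero => intro z hz; exact Or.inl hz
  | succ j ih =>
    rintro z (hz | hz)
    · exact Or.inl hz
    · right
      simp only [mem_iUnion] at hz ⊢
      obtain ⟨x, hx, h⟩ := hz
      exact ⟨x, hx, ih _ _ h⟩

lemma bs_walk (G : SimpleGraph V) (j : ℕ) (u v z : V) (h : G.Adj u v) (hz : z ∈ BS G j u v) :
    ∃ p : G.Walk v z, (SimpleGraph.Walk.cons h p).edges.IsChain (· ≠ ·) ∧ p.length ≤ j := by
  induction j generalizing u v with
  | zero =>
    obtain rfl : z = v := hz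
    exact ⟨SimpleGraph.Walk.nil, by simp, le_rfl⟩
  | succ j ih =>
    rcases hz with hz | hz
    · obtain rfl : z = v := hz
      exact ⟨SimpleGraph.Walk.nil, by simp, by simp⟩
    · simp only [mem_iUnion] at hz
      obtain ⟨x, hx, h'⟩ := hz
      obtain ⟨p, hp, hl⟩ := ih v x hx.1 h'
      refine ⟨SimpleGraph.Walk.cons hx.1 p, ?_, by simpa using hl⟩
      rw [SimpleGraph.Walk.edges_cons, SimpleGraph.Walk.edges_cons, List.isChain_cons_cons]
      refine ⟨?_, by simpa using hp⟩
      intro he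
      have := hx.2
      simp only [Sym2.eq_iff] at he
      rcases he with ⟨h1, h2⟩ | ⟨h1, h2⟩
      · exact h.ne h1
      · exact this h1.symm

lemma walk_unique (G : SimpleGraph V) (u z : V) (p q : G.Walk u z)
    (hp : p.edges.IsChain (· ≠ ·)) (hq : q.edges.IsChain (· ≠ ·))
    (hg : ((p.length + q.length : ℕ) : ℕ∞) < G.egirth) : p = q ∧ p.IsPath := by
  let H : SimpleGraph V := SimpleGraph.fromEdgeSet {e | e ∈ p.edges ++ q.edges}
  have hHG : H ≤ G := by
    intro a b hab
    have := (SimpleGraph.fromEdgeSet_adj _).1 hab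
    obtain ⟨h1, _⟩ := this
    rcases List.mem_append.1 h1 with h1 | h1
    · exact p.adj_of_mem_edges h1
    · exact q.adj_of_mem_edges h1
  have hmem : ∀ e, e ∈ G.edgeSet → e ∈ p.edges ++ q.edges → e ∈ H.edgeSet := by
    intro e he h
    rw [SimpleGraph.edgeSet_fromEdgeSet]
    exact ⟨h, G.not_isDiag_of_mem_edgeSet he⟩
  have hpe : ∀ e ∈ p.edges, e ∈ H.edgeSet := fun e he =>
    hmem e (p.edges_subset_edgeSet he) (List.mem_append.2 (Or.inl he))
  have hqe : ∀ e ∈ q.edges, e ∈ H.edgeSet := fun e he =>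
    hmem e (q.edges_subset_edgeSet he) (List.mem_append.2 (Or.inr he))
  have hac : H.IsAcyclic := by
    intro a c hc
    have hnd := hc.edges_nodup
    have hsub : c.edges ⊆ p.edges ++ q.edges := by
      intro e he
      have := c.edges_subset_edgeSet he
      rw [SimpleGraph.edgeSet_fromEdgeSet] at this
      exact this.1
    have hlen : c.length ≤ p.length + q.length := by
      have := (List.subperm_of_subset hnd hsub).length_le
      simpa using this
    have hc' : (c.mapLe hHG).IsCycle := hc.mapLe hHG
    have h1 := SimpleGraph.egirth_le_length hc'
    rw [SimpleGraph.Walk.length_map] at h1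
    have h2 : ((c.length : ℕ) : ℕ∞) ≤ ((p.length + q.length : ℕ) : ℕ∞) := by exact_mod_cast hlen
    exact absurd (lt_of_lt_of_le hg (h1.trans h2)) (lt_irrefl _)
  have hpp : (p.transfer H hpe).IsPath := by
    rw [hac.isPath_iff_isChain, SimpleGraph.Walk.edges_transfer]; exact hp
  have hqp : (q.transfer H hqe).IsPath := by
    rw [hac.isPath_iff_isChain, SimpleGraph.Walk.edges_transfer]; exact hq
  have heq := (hac.subsingleton_path u z).elim ⟨_, hpp⟩ ⟨_, hqp⟩
  have heq' : p.transfer H hpe = q.transfer H hqe := congrArg Subtype.val heq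
  constructor
  · apply SimpleGraph.Walk.ext_support
    rw [← SimpleGraph.Walk.support_transfer p hpe, ← SimpleGraph.Walk.support_transfer q hqe, heq']
  · rw [SimpleGraph.Walk.isPath_def, ← SimpleGraph.Walk.support_transfer p hpe]
    exact hpp.support_nodup

lemma root_not_mem_bs (G : SimpleGraph V) (j : ℕ) (v x : V) (h : G.Adj v x)
    (hg : ((2 * j + 2 : ℕ) : ℕ∞) < G.egirth) : v ∉ BS G j v x := by
  intro hv
  obtain ⟨p, hp, hl⟩ := bs_walk G j v x v h hv
  have := walk_unique G v v (SimpleGraph.Walk.cons h p) SimpleGraph.Walk.nil hp (by simp)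
    (lt_of_le_of_lt (by
      have : (SimpleGraph.Walk.cons h p).length + (SimpleGraph.Walk.nil : G.Walk v v).length
        ≤ 2 * j + 2 := by simp; omega
      exact_mod_cast this) hg)
  exact absurd this.1 (by simp)

lemma bs_disjoint (G : SimpleGraph V) (j : ℕ) (v x y : V) (hx : G.Adj v x) (hy : G.Adj v y)
    (hxy : x ≠ y)
    (hg : ((2 * j + 2 : ℕ) : ℕ∞) < G.egirth) : Disjoint (BS G j v x) (BS G j v y) := by
  rw [Set.disjoint_left]
  intro z hz1 hz2
  obtain ⟨p, hp, hl⟩ := bs_walk G j v x z hx hz1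
  obtain ⟨q, hq, hl'⟩ := bs_walk G j v y z hy hz2
  have := walk_unique G v z (SimpleGraph.Walk.cons hx p) (SimpleGraph.Walk.cons hy q) hp hq
    (lt_of_le_of_lt (by
      have : (SimpleGraph.Walk.cons hx p).length + (SimpleGraph.Walk.cons hy q).length
        ≤ 2 * j + 2 := by simp; omega
      exact_mod_cast this) hg)
  have h2 := this.1
  rw [SimpleGraph.Walk.cons.injEq] at h2
  exact hxy h2.1

/-- The event that label `q.2` lies in the label set of `q.1`. -/
def sset (q : V × ℕ) : Set (V → ℕ → Bool) := {ω | ω q.1 q.2 = true}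

/-- The sigma-algebra generated by the labels in `A`. -/
def FA (A : Set (V × ℕ)) : MeasurableSpace (V → ℕ → Bool) :=
  ⨆ q ∈ A, MeasurableSpace.generateFrom {sset q}

lemma measurable_sset (q : V × ℕ) : MeasurableSet (sset q) := by
  have h : Measurable (fun ω : V → ℕ → Bool => ω q.1 q.2) :=
    (measurable_pi_apply q.2).comp (measurable_pi_apply q.1)
  exact h (measurableSet_singleton true)

lemma gen_le (q : V × ℕ) :
    MeasurableSpace.generateFrom {sset q} ≤ (inferInstance : MeasurableSpace (V → ℕ → Bool)) := by
  apply MeasurableSpace.generateFrom_le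
  rintro s rfl
  exact measurable_sset q

lemma FA_le (A : Set (V × ℕ)) : FA A ≤ (inferInstance : MeasurableSpace (V → ℕ → Bool)) :=
  iSup₂_le fun q _ => gen_le q

lemma FA_mono {A B : Set (V × ℕ)} (h : A ⊆ B) : FA A ≤ FA B :=
  biSup_mono h

lemma FA_sset {A : Set (V × ℕ)} {v : V} {k : ℕ} (h : (v, k) ∈ A) :
    MeasurableSet[FA A] {ω : V → ℕ → Bool | ω v k = true} := by
  have : MeasurableSpace.generateFrom {sset (v, k)} ≤ FA A :=
    le_iSup₂ (f := fun q (_ : q ∈ A) => MeasurableSpace.generateFrom {sset q}) (v, k) h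
  exact this _ (MeasurableSpace.measurableSet_generateFrom rfl)

lemma FA_sset_false {A : Set (V × ℕ)} {v : V} {k : ℕ} (h : (v, k) ∈ A) :
    MeasurableSet[FA A] {ω : V → ℕ → Bool | ω v k = false} := by
  have := (FA_sset h).compl
  convert this using 1
  ext ω
  simp

lemma indep_real {μ : Measure (V → ℕ → Bool)} {p₀ p : ℝ} (hμ : IsLabelMeasure μ p₀ p)
    {A B : Set (V × ℕ)} (hAB : Disjoint A B) {X Y : Set (V → ℕ → Bool)}
    (hX : MeasurableSet[FA A] X) (hY : MeasurableSet[FA B] Y) :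
    μ.real (X ∩ Y) = μ.real X * μ.real Y := by
  have h := indep_iSup_of_disjoint (m := fun q : V × ℕ => MeasurableSpace.generateFrom {sset q})
    gen_le hμ.2.1 hAB
  have h2 := (Indep_iff _ _ μ).1 h X Y hX hY
  simp only [measureReal_def, h2, ENNReal.toReal_mul]

lemma meas_eu [Fintype V] (m : MeasurableSpace (V → ℕ → Bool)) (N : Set V)
    (Q : V → (V → ℕ → Bool) → Prop) (h : ∀ x ∈ N, MeasurableSet[m] {ω | Q x ω}) :
    MeasurableSet[m] {ω | ∃! x, x ∈ N ∧ Q x ω} := by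
  have h' : ∀ x, MeasurableSet[m] {ω | x ∈ N ∧ Q x ω} := by
    intro x
    by_cases hx : x ∈ N
    · simpa [hx] using h x hx
    · simp [hx]
  have : {ω | ∃! x, x ∈ N ∧ Q x ω} =
      ⋃ x, ({ω | x ∈ N ∧ Q x ω} ∩ ⋂ y, ({ω | y ∈ N ∧ Q y ω}ᶜ ∪ {_ω | y = x})) := by
    ext ω
    simp only [mem_ofPred_eq, ExistsUnique, mem_iUnion, mem_inter_iff, mem_iInter, mem_union,
      mem_compl_iff, ← imp_iff_not_or]
  rw [this]
  refine MeasurableSet.iUnion fun x => (h' x).inter (MeasurableSet.iInter fun y => ?_)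
  exact (h' y).compl.union (MeasurableSet.const _)

lemma meas_all [Fintype V] (m : MeasurableSpace (V → ℕ → Bool)) (N : Set V)
    (Q : V → (V → ℕ → Bool) → Prop) (h : ∀ x ∈ N, MeasurableSet[m] {ω | Q x ω}) :
    MeasurableSet[m] {ω | ∀ x ∈ N, ¬ Q x ω} := by
  have : {ω | ∀ x ∈ N, ¬ Q x ω} = ⋂ x, ⋂ (_ : x ∈ N), {ω | Q x ω}ᶜ := by
    ext ω; simp
  rw [this]
  exact MeasurableSet.iInter fun x => MeasurableSet.iInter fun hx => (h x hx).compl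

lemma ch_sub_bs (G : SimpleGraph V) (j : ℕ) (u v x : V) (hx : x ∈ ch G u v) :
    BS G j v x ⊆ BS G (j + 1) u v := by
  intro z hz
  right
  simp only [mem_iUnion]
  exact ⟨x, hx, hz⟩

lemma root_bs (G : SimpleGraph V) (j : ℕ) (u v : V) : v ∈ BS G j u v := by
  cases j with
  | zero => exact rfl
  | succ j => exact Or.inl rfl

lemma meas_rho [Fintype V] (G : SimpleGraph V) (j : ℕ) (u v : V) :
    MeasurableSet[FA (BS G j u v ×ˢ Iic j)] {ω | Rho G ω j u v} := by
  induction j generalizing u v with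
  | zero => exact FA_sset ⟨rfl, mem_Iic.2 le_rfl⟩
  | succ j ih =>
    have e : {ω | Rho G ω (j + 1) u v} = {ω | Rho G ω j u v} ∪
      ({ω | ω v (j + 1) = true} ∩ {ω | ∃! x, x ∈ ch G u v ∧ Rho G ω j v x}) := rfl
    rw [e]
    have hI : Iic j ⊆ Iic (j + 1) := Iic_subset_Iic.2 (Nat.le_succ j)
    refine MeasurableSet.union ?_ (MeasurableSet.inter ?_ ?_)
    · exact FA_mono (prod_mono (bs_succ G j u v) hI) _ (ih u v)
    · exact FA_sset ⟨root_bs _ _ _ _, mem_Iic.2 le_rfl⟩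
    · refine meas_eu _ _ _ fun x hx => ?_
      exact FA_mono (prod_mono (ch_sub_bs G j u v x hx) hI) _ (ih v x)

lemma meas_kap [Fintype V] (G : SimpleGraph V) (j : ℕ) (u v : V) :
    MeasurableSet[FA (({u} ∪ BS G j u v) ×ˢ Iic j)] {ω | Kap G ω j u v} := by
  induction j with
  | zero =>
    have e : {ω : V → ℕ → Bool | Kap G ω 0 u v} = {ω | ω u 0 = false} ∩ {ω | ω v 0 = true} := rfl
    rw [e]
    refine MeasurableSet.inter (FA_sset_false ⟨Or.inl rfl, mem_Iic.2 le_rfl⟩) (FA_sset ⟨Or.inr rfl, mem_Iic.2 le_rfl⟩)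
  | succ j ih =>
    have e : {ω | Kap G ω (j + 1) u v} =
      ({ω | Kap G ω j u v} ∩ {ω | ω u (j + 1) = false}) ∪
      ({ω | ω u 0 = false} ∩ ({ω | Rho G ω j u v}ᶜ ∩ {ω | Rho G ω (j + 1) u v})) := rfl
    rw [e]
    have hI : Iic j ⊆ Iic (j + 1) := Iic_subset_Iic.2 (Nat.le_succ j)
    have hB := bs_succ G j u v
    refine MeasurableSet.union (MeasurableSet.inter ?_ ?_)
      (MeasurableSet.inter ?_ (MeasurableSet.inter (MeasurableSet.compl ?_) ?_))
    · exact FA_mono (prod_mono (union_subset_union_right _ hB) hI) _ ih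
    · exact FA_sset_false ⟨Or.inl rfl, mem_Iic.2 le_rfl⟩
    · exact FA_sset_false ⟨Or.inl rfl, mem_Iic.2 (Nat.zero_le _)⟩
    · exact FA_mono (prod_mono (hB.trans subset_union_right) hI) _ (meas_rho G j u v)
    · exact FA_mono (prod_mono subset_union_right subset_rfl) _ (meas_rho G (j + 1) u v)

lemma meas_allnot [Fintype V] (G : SimpleGraph V) (j : ℕ) (v : V) (N : Set V) :
    MeasurableSet[FA ((⋃ x ∈ N, BS G j v x) ×ˢ Iic j)] {ω | ∀ x ∈ N, ¬ Rho G ω j v x} := by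
  refine meas_all _ _ _ fun x hx => ?_
  exact FA_mono (prod_mono (subset_biUnion_of_mem (u := fun x => BS G j v x) hx) subset_rfl) _
    (meas_rho G j v x)

lemma meas_EE [Fintype V] (G : SimpleGraph V) (j : ℕ) (v : V) (N : Set V) :
    MeasurableSet[FA (({v} ∪ ⋃ x ∈ N, BS G j v x) ×ˢ Iic j)] {ω | EE G ω N j v} := by
  have e : {ω | EE G ω N j v} = {ω | ω v 0 = false} ∩ {ω | ∀ x ∈ N, ¬ Rho G ω j v x} := rfl
  rw [e]
  refine MeasurableSet.inter (FA_sset_false ⟨Or.inl rfl, mem_Iic.2 (Nat.zero_le _)⟩) ?_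
  exact FA_mono (prod_mono subset_union_right subset_rfl) _ (meas_allnot G j v N)

lemma meas_DD1 [Fintype V] (G : SimpleGraph V) (j : ℕ) (v x : V) (N : Set V) (hx : x ∈ N) :
    MeasurableSet[FA (({v} ∪ ⋃ x ∈ N, BS G j v x) ×ˢ Iic j)]
      ({ω | Kap G ω j v x} ∩ {ω | ∀ y ∈ N \ {x}, ¬ Rho G ω j v y}) := by
  refine MeasurableSet.inter ?_ ?_
  · exact FA_mono (prod_mono (union_subset_union_right _
      (subset_biUnion_of_mem (u := fun x => BS G j v x) hx)) subset_rfl) _ (meas_kap G j v x)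
  · exact FA_mono (prod_mono ((biUnion_subset_biUnion_left sdiff_subset).trans subset_union_right)
      subset_rfl) _ (meas_allnot G j v _)

lemma DD_eq (G : SimpleGraph V) (j : ℕ) (v : V) (N : Set V) :
    {ω | DD G ω N j v} =
      ⋃ x ∈ N, ({ω | Kap G ω j v x} ∩ {ω | ∀ y ∈ N \ {x}, ¬ Rho G ω j v y}) := by
  ext ω
  simp [DD]
  exact exists_congr fun x => by tauto

lemma meas_DD [Fintype V] (G : SimpleGraph V) (j : ℕ) (v : V) (N : Set V) :
    MeasurableSet[FA (({v} ∪ ⋃ x ∈ N, BS G j v x) ×ˢ Iic j)] {ω | DD G ω N j v} := by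
  rw [DD_eq]
  exact MeasurableSet.iUnion fun x => MeasurableSet.iUnion fun hx => meas_DD1 G j v x N hx

section Prob

variable {μ : Measure (V → ℕ → Bool)} {p₀ p : ℝ}

lemma real_sset (hμ : IsLabelMeasure μ p₀ p) (v : V) (k : ℕ) (h0 : 0 ≤ p₀) (h : 0 ≤ p) :
    μ.real {ω | ω v k = true} = if k = 0 then p₀ else p := by
  rw [measureReal_def, hμ.2.2 v k, ENNReal.toReal_ofReal]
  split_ifs <;> assumption

lemma real_compl (hμ : IsLabelMeasure μ p₀ p) {X : Set (V → ℕ → Bool)} (hX : MeasurableSet X) :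
    μ.real Xᶜ = 1 - μ.real X := by
  have := hμ.1
  exact probReal_compl_eq_one_sub hX

lemma real_sset_false (hμ : IsLabelMeasure μ p₀ p) (v : V) (k : ℕ) (h0 : 0 ≤ p₀) (h : 0 ≤ p) :
    μ.real {ω | ω v k = false} = 1 - if k = 0 then p₀ else p := by
  have e := real_compl hμ (measurable_sset (v, k))
  have e2 : μ.real (sset (v, k)) = _ := real_sset hμ v k h0 h
  rw [← e2, ← e]
  congr 1
  ext ω
  simp [sset]

lemma real_allnot [Fintype V] (hμ : IsLabelMeasure μ p₀ p) (G : SimpleGraph V) (j : ℕ) (v : V)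
    (hg : ((2 * j + 2 : ℕ) : ℕ∞) < G.egirth) (a : ℝ)
    (ha : ∀ x, G.Adj v x → μ.real {ω | ¬ Rho G ω j v x} = a)
    (N : Finset V) (hN : ∀ x ∈ N, G.Adj v x) :
    μ.real {ω | ∀ x ∈ (N : Set V), ¬ Rho G ω j v x} = a ^ N.card := by
  have := hμ.1
  induction N using Finset.induction_on with
  | empty => simp
  | insert x N hx ih =>
    have e : {ω | ∀ y ∈ ((insert x N : Finset V) : Set V), ¬ Rho G ω j v y} =
        {ω | Rho G ω j v x}ᶜ ∩ {ω | ∀ x ∈ (N : Set V), ¬ Rho G ω j v x} := by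
      ext ω; simp
    have hvx := hN x (Finset.mem_insert_self _ _)
    have hN' : ∀ x ∈ N, G.Adj v x := fun y hy => hN y (Finset.mem_insert_of_mem hy)
    rw [e, indep_real hμ (A := BS G j v x ×ˢ Iic j) ?_ (meas_rho G j v x).compl
      (meas_allnot G j v N), ih hN', Finset.card_insert_of_notMem hx, pow_succ, mul_comm]
    · congr 1
      exact ha x hvx
    · apply Disjoint.set_prod_left
      rw [disjoint_iUnion₂_right]
      intro y hy
      refine bs_disjoint G j v x y hvx (hN' y hy) ?_ hg
      rintro rfl
      exact hx hy

lemma root_not_mem_union (G : SimpleGraph V) (j : ℕ) (v : V) (N : Set V)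
    (hN : ∀ x ∈ N, G.Adj v x) (hg : ((2 * j + 2 : ℕ) : ℕ∞) < G.egirth) :
    Disjoint {v} (⋃ x ∈ N, BS G j v x) := by
  rw [disjoint_iUnion₂_right]
  intro y hy
  rw [disjoint_singleton_left]
  exact root_not_mem_bs G j v y (hN y hy) hg

lemma real_EE [Fintype V] (hμ : IsLabelMeasure μ p₀ p) (h0 : 0 ≤ p₀) (h1 : 0 ≤ p)
    (G : SimpleGraph V) (j : ℕ) (v : V)
    (hg : ((2 * j + 2 : ℕ) : ℕ∞) < G.egirth) (a : ℝ)
    (ha : ∀ x, G.Adj v x → μ.real {ω | ¬ Rho G ω j v x} = a)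
    (N : Finset V) (hN : ∀ x ∈ N, G.Adj v x) :
    μ.real {ω | EE G ω N j v} = (1 - p₀) * a ^ N.card := by
  have e : {ω | EE G ω N j v} =
    {ω | ω v 0 = false} ∩ {ω | ∀ x ∈ (N : Set V), ¬ Rho G ω j v x} := rfl
  rw [e, indep_real hμ (A := {v} ×ˢ Iic j) ?_ (FA_sset_false ⟨rfl, mem_Iic.2 (Nat.zero_le _)⟩)
    (meas_allnot G j v N), real_allnot hμ G j v hg a ha N hN, real_sset_false hμ v 0 h0 h1]
  · simp
  · exact Disjoint.set_prod_left (root_not_mem_union G j v N hN hg) _ _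

lemma real_DD [Fintype V] (hμ : IsLabelMeasure μ p₀ p)
    (G : SimpleGraph V) (j : ℕ) (v : V)
    (hg : ((2 * j + 2 : ℕ) : ℕ∞) < G.egirth) (a c : ℝ)
    (ha : ∀ x, G.Adj v x → μ.real {ω | ¬ Rho G ω j v x} = a)
    (hc : ∀ x, G.Adj v x → μ.real {ω | Kap G ω j v x} = c)
    (N : Finset V) (hN : ∀ x ∈ N, G.Adj v x) :
    μ.real {ω | DD G ω N j v} = N.card * (c * a ^ (N.card - 1)) := by
  have := hμ.1
  rw [DD_eq]
  simp only [Finset.mem_coe]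
  rw [measureReal_biUnion_finset]
  · rw [← nsmul_eq_mul]
    apply Finset.sum_eq_card_nsmul
    intro x hx
    have eN : (N : Set V) \ {x} = ((N.erase x : Finset V) : Set V) := by simp
    rw [eN, indep_real hμ (A := ({v} ∪ BS G j v x) ×ˢ Iic j) ?_ (meas_kap G j v x)
      (meas_allnot G j v _), hc x (hN x hx), real_allnot hμ G j v hg a ha (N.erase x)
        (fun y hy => hN y (Finset.mem_of_mem_erase hy)), Finset.card_erase_of_mem hx]
    apply Disjoint.set_prod_left
    have hN' : ∀ y ∈ N.erase x, G.Adj v y := fun y hy => hN y (Finset.mem_of_mem_erase hy)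
    rw [disjoint_union_left]
    refine ⟨root_not_mem_union G j v _ hN' hg, ?_⟩
    rw [disjoint_iUnion₂_right]
    intro y hy
    exact bs_disjoint G j v x y (hN x hx) (hN' y hy) (Finset.ne_of_mem_erase hy).symm hg
  · intro x hx y hy hxy
    rw [Function.onFun, Set.disjoint_left]
    rintro ω ⟨h1, h2⟩ ⟨h3, h4⟩
    exact h2 y ⟨hy, hxy.symm⟩ (kap_rho _ _ _ _ _ h3)
  · intro x hx
    exact FA_le _ _ (meas_DD1 G j v x N hx)

/-- The two basic sequences. -/
noncomputable def ac (r : ℕ) (p₀ p : ℝ) : ℕ → ℝ × ℝ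
  | 0 => (1 - p₀, (1 - p₀) * p₀)
  | j + 1 => ((ac r p₀ p j).1 - p * (((r : ℝ) - 1) * ((ac r p₀ p j).2 * (ac r p₀ p j).1 ^ (r - 2))),
      (ac r p₀ p j).2 * (1 - p) +
        (1 - p₀) * (p * (((r : ℝ) - 1) * ((ac r p₀ p j).2 * (ac r p₀ p j).1 ^ (r - 2)))))

/-- Finset version of `ch`. -/
noncomputable def chF [Fintype V] (G : SimpleGraph V) (u v : V) : Finset V := (ch G u v).toFinset

lemma coe_chF [Fintype V] (G : SimpleGraph V) (u v : V) : (chF G u v : Set V) = ch G u v := by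
  simp [chF]

lemma chF_adj [Fintype V] (G : SimpleGraph V) (u v : V) : ∀ x ∈ chF G u v, G.Adj v x := by
  intro x hx
  have : x ∈ ch G u v := by rw [← coe_chF]; exact hx
  exact this.1

lemma chF_card [Fintype V] (G : SimpleGraph V) (u v : V) (r : ℕ) (hreg : IsRegular G r)
    (huv : G.Adj u v) : (chF G u v).card = r - 1 := by
  rw [← Set.ncard_coe_finset, coe_chF, ← hreg v]
  have : ch G u v = G.neighborSet v \ {u} := by
    ext x; simp [ch]
  rw [this, Set.ncard_sdiff_singleton_of_mem]
  exact huv.symm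

lemma r_pos [Fintype V] (G : SimpleGraph V) (u v : V) (r : ℕ) (hreg : IsRegular G r)
    (huv : G.Adj u v) : 1 ≤ r := by
  rw [← hreg u, Nat.one_le_iff_ne_zero, ← Nat.pos_iff_ne_zero, Set.ncard_pos]
  exact ⟨v, huv⟩

lemma real_DD_ch [Fintype V] (hμ : IsLabelMeasure μ p₀ p)
    (G : SimpleGraph V) (r : ℕ) (hreg : IsRegular G r) (j : ℕ) (u v : V) (huv : G.Adj u v)
    (hg : ((2 * j + 2 : ℕ) : ℕ∞) < G.egirth) (a c : ℝ)
    (ha : ∀ x, G.Adj v x → μ.real {ω | ¬ Rho G ω j v x} = a)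
    (hc : ∀ x, G.Adj v x → μ.real {ω | Kap G ω j v x} = c) :
    μ.real {ω | DD G ω (ch G u v) j v} = ((r : ℝ) - 1) * (c * a ^ (r - 2)) := by
  rw [← coe_chF, real_DD hμ G j v hg a c ha hc _ (chF_adj G u v), chF_card G u v r hreg huv,
    Nat.cast_sub (r_pos G u v r hreg huv)]
  simp [Nat.sub_sub]

lemma real_EE_ch [Fintype V] (hμ : IsLabelMeasure μ p₀ p) (h0 : 0 ≤ p₀) (h1 : 0 ≤ p)
    (G : SimpleGraph V) (r : ℕ) (hreg : IsRegular G r) (j : ℕ) (u v : V) (huv : G.Adj u v)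
    (hg : ((2 * j + 2 : ℕ) : ℕ∞) < G.egirth) (a : ℝ)
    (ha : ∀ x, G.Adj v x → μ.real {ω | ¬ Rho G ω j v x} = a) :
    μ.real {ω | EE G ω (ch G u v) j v} = (1 - p₀) * a ^ (r - 1) := by
  rw [← coe_chF, real_EE hμ h0 h1 G j v hg a ha _ (chF_adj G u v), chF_card G u v r hreg huv]

lemma real_ac [Fintype V] (hμ : IsLabelMeasure μ p₀ p) (h0 : 0 ≤ p₀) (h1 : 0 ≤ p)
    (G : SimpleGraph V) (r : ℕ) (hreg : IsRegular G r) (j : ℕ)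
    (hg : ((2 * j + 2 : ℕ) : ℕ∞) < G.egirth) : ∀ u v, G.Adj u v →
    μ.real {ω | ¬ Rho G ω j u v} = (ac r p₀ p j).1 ∧
    μ.real {ω | Kap G ω j u v} = (ac r p₀ p j).2 := by
  have := hμ.1
  induction j with
  | zero =>
    intro u v huv
    constructor
    · have e : {ω | ¬ Rho G ω 0 u v} = {ω : V → ℕ → Bool | ω v 0 = false} := by
        ext ω; simp [Rho]
      rw [e, real_sset_false hμ v 0 h0 h1]
      simp [ac]
    · have e : {ω : V → ℕ → Bool | Kap G ω 0 u v} = {ω | ω u 0 = false} ∩ {ω | ω v 0 = true} := rfl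
      rw [e, indep_real hμ (A := {(u, 0)}) (B := {(v, 0)}) ?_ (FA_sset_false rfl) (FA_sset rfl),
        real_sset_false hμ u 0 h0 h1, real_sset hμ v 0 h0 h1]
      · simp [ac]
      · have := huv.ne
        simp [this]
  | succ j ih =>
    have hg' : ((2 * j + 2 : ℕ) : ℕ∞) < G.egirth :=
      lt_of_le_of_lt (by exact_mod_cast (by omega : 2 * j + 2 ≤ 2 * (j + 1) + 2)) hg
    have IH := ih hg'
    intro u v huv
    have hD := real_DD_ch hμ G r hreg j u v huv hg' _ _ (fun x hx => (IH v x hx).1)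
      (fun x hx => (IH v x hx).2)
    have mD := meas_DD G j v (ch G u v)
    have mDs : μ.real ({ω | DD G ω (ch G u v) j v} ∩ {ω | ω v (j + 1) = true}) =
        (((r : ℝ) - 1) * ((ac r p₀ p j).2 * (ac r p₀ p j).1 ^ (r - 2))) * p := by
      rw [indep_real hμ (B := {(v, j + 1)}) ?_ mD (FA_sset rfl), hD, real_sset hμ v (j + 1) h0 h1]
      · simp
      · rw [disjoint_singleton_right]
        rintro ⟨_, h⟩
        simp at h
    have rho_succ : ∀ ω, (¬ Rho G ω (j + 1) u v) ↔ (¬ Rho G ω j u v ∧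
        ¬ (DD G ω (ch G u v) j v ∧ ω v (j + 1) = true)) := by
      intro ω
      rw [dd_iff, ← not_rho_iff]
      show ¬ (Rho G ω j u v ∨ (ω v (j + 1) = true ∧ ∃! x, x ∈ ch G u v ∧ Rho G ω j v x)) ↔ _
      tauto
    constructor
    · have e : {ω | ¬ Rho G ω (j + 1) u v} = {ω | ¬ Rho G ω j u v} \
          ({ω | DD G ω (ch G u v) j v} ∩ {ω | ω v (j + 1) = true}) := by
        ext ω; exact rho_succ ω
      rw [e, measureReal_sdiff, mDs, (IH u v huv).1]
      · simp only [ac]; ring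
      · rintro ω ⟨h, _⟩
        exact dd_not_rho _ _ _ _ _ h
      · exact (FA_le _ _ mD).inter (measurable_sset (v, j + 1))
    · have e : {ω | Kap G ω (j + 1) u v} =
          ({ω | Kap G ω j u v} ∩ {ω | ω u (j + 1) = false}) ∪
          ({ω | ω u 0 = false} ∩
            ({ω | DD G ω (ch G u v) j v} ∩ {ω | ω v (j + 1) = true})) := by
        ext ω
        have h1 := rho_succ ω
        have h2 := dd_not_rho G ω j u v
        show ((Kap G ω j u v ∧ ω u (j + 1) = false) ∨
          (ω u 0 = false ∧ ¬ Rho G ω j u v ∧ Rho G ω (j + 1) u v)) ↔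
          ((Kap G ω j u v ∧ ω u (j + 1) = false) ∨ (ω u 0 = false ∧
            (DD G ω (ch G u v) j v ∧ ω v (j + 1) = true)))
        tauto
      have mDs' : MeasurableSet[FA (BS G (j + 1) u v ×ˢ Iic (j + 1))]
          ({ω | DD G ω (ch G u v) j v} ∩ {ω | ω v (j + 1) = true}) := by
        refine MeasurableSet.inter ?_ (FA_sset ⟨root_bs _ _ _ _, mem_Iic.2 le_rfl⟩)
        exact FA_mono (prod_mono subset_rfl (Iic_subset_Iic.2 (Nat.le_succ j))) _ mD
      rw [e, measureReal_union]
      · rw [indep_real hμ (B := {(u, j + 1)}) ?_ (meas_kap G j u v) (FA_sset_false rfl),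
          indep_real hμ (A := {(u, 0)}) ?_ (FA_sset_false rfl) mDs', mDs, (IH u v huv).2,
          real_sset_false hμ u (j + 1) h0 h1, real_sset_false hμ u 0 h0 h1]
        · rw [if_neg (Nat.succ_ne_zero j), if_pos rfl]; simp only [ac]; ring
        · rw [disjoint_singleton_left]
          rintro ⟨h, _⟩
          exact root_not_mem_bs G (j + 1) u v huv hg h
        · rw [disjoint_singleton_right]
          rintro ⟨_, h⟩
          simp at h
      · rw [Set.disjoint_left]
        rintro ω ⟨h, _⟩ ⟨_, h', _⟩
        exact dd_not_rho _ _ _ _ _ h' (kap_rho _ _ _ _ _ h)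
      · exact ((FA_le _ _ (FA_sset_false (A := {(u, 0)}) rfl))).inter (FA_le _ _ mDs')

lemma ac_pos [Fintype V] (hμ : IsLabelMeasure μ p₀ p) (h0 : p₀ ∈ Ioo (0 : ℝ) 1)
    (h1 : p ∈ Ioo (0 : ℝ) 1)
    (G : SimpleGraph V) (r : ℕ) (hreg : IsRegular G r) (u v : V) (huv : G.Adj u v) (j : ℕ)
    (hg : ((2 * j + 2 : ℕ) : ℕ∞) < G.egirth) :
    0 < (ac r p₀ p j).1 ∧ 0 < (ac r p₀ p j).2 := by
  have := hμ.1
  obtain ⟨h0a, h0b⟩ := h0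
  obtain ⟨h1a, h1b⟩ := h1
  induction j with
  | zero =>
    simp only [ac]
    exact ⟨by linarith, mul_pos (by linarith) h0a⟩
  | succ j ih =>
    have hg' : ((2 * j + 2 : ℕ) : ℕ∞) < G.egirth :=
      lt_of_le_of_lt (by exact_mod_cast (by omega : 2 * j + 2 ≤ 2 * (j + 1) + 2)) hg
    obtain ⟨ha, hc⟩ := ih hg'
    have IH := real_ac hμ h0a.le h1a.le G r hreg j hg'
    have hD := real_DD_ch hμ G r hreg j u v huv hg' _ _ (fun x hx => (IH v x hx).1)
      (fun x hx => (IH v x hx).2)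
    have hle : μ.real {ω | DD G ω (ch G u v) j v} ≤ μ.real {ω | ¬ Rho G ω j u v} :=
      measureReal_mono (fun ω h => dd_not_rho _ _ _ _ _ h)
    have hnn : 0 ≤ μ.real {ω | DD G ω (ch G u v) j v} := measureReal_nonneg
    rw [hD, (IH u v huv).1] at hle
    rw [hD] at hnn
    simp only [ac]
    constructor
    · nlinarith
    · have := mul_pos hc (by linarith : 0 < 1 - p)
      have := mul_nonneg (by linarith : 0 ≤ 1 - p₀) (mul_nonneg h1a.le hnn)
      linarith

lemma real_two [Fintype V] (hμ : IsLabelMeasure μ p₀ p)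
    (G : SimpleGraph V) (j : ℕ) (u v : V) (huv : G.Adj u v)
    (hg : ((2 * (j + 1) + 2 : ℕ) : ℕ∞) < G.egirth) (X Y : Set (V → ℕ → Bool))
    (hX : MeasurableSet[FA (BS G (j + 1) v u ×ˢ Iic j)] X)
    (hY : MeasurableSet[FA (BS G (j + 1) u v ×ˢ Iic j)] Y) :
    μ.real (X ∩ Y) = μ.real X * μ.real Y := by
  refine indep_real hμ ?_ hX hY
  apply Disjoint.set_prod_left
  show Disjoint _ ({v} ∪ ⋃ x ∈ ch G u v, BS G j v x)
  rw [disjoint_union_right]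
  constructor
  · rw [disjoint_singleton_right]
    exact root_not_mem_bs G (j + 1) v u huv.symm hg
  · rw [disjoint_iUnion₂_right]
    intro x hx
    exact (bs_disjoint G (j + 1) v u x huv.symm hx.1 hx.2.symm hg).mono_right (bs_succ G j v x)

lemma closed_forms [Fintype V] (hμ : IsLabelMeasure μ p₀ p) (h0 : p₀ ∈ Ioo (0 : ℝ) 1)
    (h1 : p ∈ Ioo (0 : ℝ) 1)
    (G : SimpleGraph V) (r : ℕ) (hreg : IsRegular G r) (u v : V) (huv : G.Adj u v) (j : ℕ)
    (hg : ((2 * (j + 1) + 2 : ℕ) : ℕ∞) < G.egirth) (a c : ℝ) (ha : a = (ac r p₀ p j).1)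
    (hc : c = (ac r p₀ p j).2) :
    (μ (WEv G j u)).toReal = (1 - p₀) * a ^ r ∧
    (μ (BEv G j u)).toReal = r * (c * a ^ (r - 1)) ∧
    (μ (WEv G j u ∩ WEv G j v)).toReal = ((1 - p₀) * a ^ (r - 1)) * ((1 - p₀) * a ^ (r - 1)) ∧
    (μ (BEv G j u ∩ WEv G j v)).toReal =
      (((r : ℝ) - 1) * (c * a ^ (r - 2))) * ((1 - p₀) * a ^ (r - 1)) ∧
    (μ (BEv G j u ∩ BEv G j v)).toReal =
      (((r : ℝ) - 1) * (c * a ^ (r - 2))) * (((r : ℝ) - 1) * (c * a ^ (r - 2))) := by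
  have hg' : ((2 * j + 2 : ℕ) : ℕ∞) < G.egirth :=
    lt_of_le_of_lt (by exact_mod_cast (by omega : 2 * j + 2 ≤ 2 * (j + 1) + 2)) hg
  have IH := real_ac hμ h0.1.le h1.1.le G r hreg j hg'
  rw [← ha, ← hc] at IH
  have hA : ∀ v x, G.Adj v x → μ.real {ω | ¬ Rho G ω j v x} = a := fun v x hx => (IH v x hx).1
  have hC : ∀ v x, G.Adj v x → μ.real {ω | Kap G ω j v x} = c := fun v x hx => (IH v x hx).2
  have eN : (((G.neighborSet u).toFinset : Finset V) : Set V) = G.neighborSet u := by simp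
  have cN : ((G.neighborSet u).toFinset : Finset V).card = r := by
    rw [← Set.ncard_coe_finset, eN, hreg u]
  have aN : ∀ x ∈ (G.neighborSet u).toFinset, G.Adj u x := by simp
  have hEu := real_EE_ch hμ h0.1.le h1.1.le G r hreg j v u huv.symm hg' a (hA u)
  have hEv := real_EE_ch hμ h0.1.le h1.1.le G r hreg j u v huv hg' a (hA v)
  have hDu := real_DD_ch hμ G r hreg j v u huv.symm hg' a c (hA u) (hC u)
  have hDv := real_DD_ch hμ G r hreg j u v huv hg' a c (hA v) (hC v)
  simp only [← measureReal_def]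
  refine ⟨?_, ?_, ?_, ?_, ?_⟩
  · have e : WEv G j u = {ω | EE G ω ((G.neighborSet u).toFinset : Finset V) j u} := by
      ext ω; rw [eN]; exact white_iff G ω j u
    rw [e, real_EE hμ h0.1.le h1.1.le G j u hg' a (hA u) _ aN, cN]
  · have e : BEv G j u = {ω | DD G ω ((G.neighborSet u).toFinset : Finset V) j u} := by
      ext ω; rw [eN]; exact blue_iff G ω j u
    rw [e, real_DD hμ G j u hg' a c (hA u) (hC u) _ aN, cN]
  · have e : WEv G j u ∩ WEv G j v = {ω | EE G ω (ch G v u) j u} ∩ {ω | EE G ω (ch G u v) j v} := by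
      ext ω; exact ww_iff G ω j u v huv
    rw [e, real_two hμ G j u v huv hg _ _ (meas_EE G j u _) (meas_EE G j v _), hEu, hEv]
  · have e : BEv G j u ∩ WEv G j v = {ω | DD G ω (ch G v u) j u} ∩ {ω | EE G ω (ch G u v) j v} := by
      ext ω; exact bw_iff G ω j u v huv
    rw [e, real_two hμ G j u v huv hg _ _ (meas_DD G j u _) (meas_EE G j v _), hDu, hEv]
  · have e : BEv G j u ∩ BEv G j v = {ω | DD G ω (ch G v u) j u} ∩ {ω | DD G ω (ch G u v) j v} := by
      ext ω; exact bb_iff G ω j u v huv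
    rw [e, real_two hμ G j u v huv hg _ _ (meas_DD G j u _) (meas_DD G j v _), hDu, hDv]

end Prob

lemma algebra_step (r : ℕ) (hr : 1 ≤ r) (p₀ p : ℝ) (h0 : 0 < 1 - p₀) (a c a' c' : ℝ)
    (ha : 0 < a) (hc : 0 < c)
    (ha' : a' = a - p * (((r : ℝ) - 1) * (c * a ^ (r - 2))))
    (hc' : c' = c * (1 - p) + (1 - p₀) * (p * (((r : ℝ) - 1) * (c * a ^ (r - 2)))))
    (w1 b1 q1 s1 t1 w2 b2 q2 s2 t2 : ℝ)
    (hw1 : w1 = (1 - p₀) * a ^ r)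
    (hb1 : b1 = r * (c * a ^ (r - 1)))
    (hq1 : q1 = ((1 - p₀) * a ^ (r - 1)) * ((1 - p₀) * a ^ (r - 1)))
    (hs1 : s1 = (((r : ℝ) - 1) * (c * a ^ (r - 2))) * ((1 - p₀) * a ^ (r - 1)))
    (ht1 : t1 = (((r : ℝ) - 1) * (c * a ^ (r - 2))) * (((r : ℝ) - 1) * (c * a ^ (r - 2))))
    (hw2 : w2 = (1 - p₀) * a' ^ r)
    (hb2 : b2 = r * (c' * a' ^ (r - 1)))
    (hq2 : q2 = ((1 - p₀) * a' ^ (r - 1)) * ((1 - p₀) * a' ^ (r - 1)))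
    (hs2 : s2 = (((r : ℝ) - 1) * (c' * a' ^ (r - 2))) * ((1 - p₀) * a' ^ (r - 1)))
    (ht2 : t2 = (((r : ℝ) - 1) * (c' * a' ^ (r - 2))) * (((r : ℝ) - 1) * (c' * a' ^ (r - 2)))) :
    w2 = w1 * (1 - p * s1 / w1) ^ r ∧
    b2 = b1 * (1 - p) * (1 - r * p * t1 / (((r : ℝ) - 1) * b1)) ^ (r - 1)
        + r * p * s1 * (1 - p * s1 / w1) ^ (r - 1) ∧
    q2 = q1 * (1 - p * s1 / w1) ^ (2 * r - 2) ∧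
    s2 = s1 * (1 - p) * (1 - p * s1 / w1) ^ (r - 1)
          * (1 - r * p * t1 / (((r : ℝ) - 1) * b1)) ^ (r - 2)
        + ((r : ℝ) - 1) * p * q1 * s1 / w1 * (1 - p * s1 / w1) ^ (2 * r - 3) ∧
    t2 = t1 * (1 - p) ^ 2 * (1 - r * p * t1 / (((r : ℝ) - 1) * b1)) ^ (2 * r - 4)
        + 2 * s1 * (1 - p) * (1 - r * p * t1 / (((r : ℝ) - 1) * b1)) ^ (r - 2)
          * (((r : ℝ) - 1) * p * s1 / w1) * (1 - p * s1 / w1) ^ (r - 2)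
        + q1 * (((r : ℝ) - 1) ^ 2 * p ^ 2 * s1 ^ 2 / w1 ^ 2)
          * (1 - p * s1 / w1) ^ (2 * r - 4) := by
  obtain rfl | hr2 : r = 1 ∨ 2 ≤ r := by omega
  · simp at *
    subst_vars
    simp
  · obtain ⟨n, rfl⟩ : ∃ n, r = n + 2 := ⟨r - 2, by omega⟩
    have e1 : n + 2 - 1 = n + 1 := by omega
    have e2 : n + 2 - 2 = n := by omega
    have e3 : 2 * (n + 2) - 2 = (n + 1) + (n + 1) := by omega
    have e4 : 2 * (n + 2) - 3 = n + (n + 1) := by omega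
    have e5 : 2 * (n + 2) - 4 = n + n := by omega
    have e6 : ((n + 2 : ℕ) : ℝ) - 1 = n + 1 := by push_cast; ring
    have hn : (0 : ℝ) < n + 1 := by positivity
    have hn2 : (0 : ℝ) < ((n + 2 : ℕ) : ℝ) := by positivity
    simp only [e1, e2, e3, e4, e5, e6] at *
    generalize hR : ((n + 2 : ℕ) : ℝ) = R at *
    generalize hM : (n : ℝ) + 1 = M at *
    have han : 0 < a ^ n := pow_pos ha n
    obtain ⟨d, hd⟩ : ∃ d, d = M * (c * a ^ n) := ⟨_, rfl⟩
    rw [← hd] at ha' hc' hs1 ht1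
    have hsw : s1 / w1 = d / a := by
      rw [hs1, hw1, div_eq_div_iff (by positivity) ha.ne']; ring
    have hX : p * s1 / w1 = p * (d / a) := by rw [mul_div_assoc, hsw]
    have hY : R * p * t1 / (M * b1) = p * (d / a) := by
      have : M * b1 = R * (d * a) := by rw [hb1, hd]; ring
      have hdp : 0 < d := by rw [hd]; positivity
      rw [this, ht1]
      field_simp
    have hx : a' = a * (1 - p * (d / a)) := by
      rw [ha']; field_simp
    have hZ1 : M * p * q1 * s1 / w1 = M * p * q1 * (d / a) := by rw [mul_div_assoc, hsw]
    have hZ2 : M * p * s1 / w1 = M * p * (d / a) := by rw [mul_div_assoc, hsw]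
    have hZ3 : M ^ 2 * p ^ 2 * s1 ^ 2 / w1 ^ 2 = M ^ 2 * p ^ 2 * (d / a) ^ 2 := by
      rw [mul_div_assoc, ← div_pow, hsw]
    rw [hX, hY, hZ1, hZ2, hZ3, hw2, hb2, hq2, hs2, ht2, hx]
    generalize 1 - p * (d / a) = x
    obtain ⟨y, hy⟩ : ∃ y, y = d / a := ⟨_, rfl⟩
    have hdy : d = a * y := by rw [hy]; field_simp
    rw [← hy, hw1, hb1, hq1, hs1, ht1, hc']
    have hd2 : a * y = M * (c * a ^ n) := by rw [← hdy, hd]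
    rw [hdy]
    simp only [mul_pow, pow_add, pow_one]
    refine ⟨by ring, by ring, by ring, ?_, ?_⟩
    · linear_combination (-(1 - p) * (1 - p₀) * x ^ (2 * n + 1) * a ^ (n + 1)) * hd2
    · linear_combination (-((M * c * a ^ n + a * y) * (1 - p) ^ 2 +
        2 * (1 - p) * M * ((1 - p₀) * p * a * y) * a ^ n) * x ^ (2 * n)) * hd2

end Helpers

/-- The recurrences satisfied by `w_i, b_i, q_i, s_i, t_i`, where the
quantities are computed from any vertex `u` and neighbour `v`. -/
theorem recurrences_for_probabilities
    [Fintype V] (r g : ℕ) (G : SimpleGraph V)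
    (hreg : IsRegular G r) (hg : (g : ℕ∞) ≤ G.egirth)
    (p₀ p : ℝ) (hp₀ : p₀ ∈ Ioo (0 : ℝ) 1) (hp : p ∈ Ioo (0 : ℝ) 1)
    (μ : Measure (V → ℕ → Bool)) (hμ : IsLabelMeasure μ p₀ p)
    (i : ℕ) (hi : 1 ≤ i) (hi1 : 2 * i < g - 3) (hi2 : 2 * (i + 2) < g - 2)
    (u v : V) (huv : G.Adj u v)
    (w1 b1 q1 s1 t1 w2 b2 q2 s2 t2 : ℝ)
    (hw1 : w1 = (μ (WEv G (i - 1) u)).toReal)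
    (hb1 : b1 = (μ (BEv G (i - 1) u)).toReal)
    (hq1 : q1 = (μ (WEv G (i - 1) u ∩ WEv G (i - 1) v)).toReal)
    (hs1 : s1 = (μ (BEv G (i - 1) u ∩ WEv G (i - 1) v)).toReal)
    (ht1 : t1 = (μ (BEv G (i - 1) u ∩ BEv G (i - 1) v)).toReal)
    (hw2 : w2 = (μ (WEv G i u)).toReal)
    (hb2 : b2 = (μ (BEv G i u)).toReal)
    (hq2 : q2 = (μ (WEv G i u ∩ WEv G i v)).toReal)
    (hs2 : s2 = (μ (BEv G i u ∩ WEv G i v)).toReal)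
    (ht2 : t2 = (μ (BEv G i u ∩ BEv G i v)).toReal) :
    w2 = w1 * (1 - p * s1 / w1) ^ r ∧
    b2 = b1 * (1 - p) * (1 - r * p * t1 / (((r : ℝ) - 1) * b1)) ^ (r - 1)
        + r * p * s1 * (1 - p * s1 / w1) ^ (r - 1) ∧
    q2 = q1 * (1 - p * s1 / w1) ^ (2 * r - 2) ∧
    s2 = s1 * (1 - p) * (1 - p * s1 / w1) ^ (r - 1)
          * (1 - r * p * t1 / (((r : ℝ) - 1) * b1)) ^ (r - 2)
        + ((r : ℝ) - 1) * p * q1 * s1 / w1 * (1 - p * s1 / w1) ^ (2 * r - 3) ∧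
    t2 = t1 * (1 - p) ^ 2 * (1 - r * p * t1 / (((r : ℝ) - 1) * b1)) ^ (2 * r - 4)
        + 2 * s1 * (1 - p) * (1 - r * p * t1 / (((r : ℝ) - 1) * b1)) ^ (r - 2)
          * (((r : ℝ) - 1) * p * s1 / w1) * (1 - p * s1 / w1) ^ (r - 2)
        + q1 * (((r : ℝ) - 1) ^ 2 * p ^ 2 * s1 ^ 2 / w1 ^ 2)
          * (1 - p * s1 / w1) ^ (2 * r - 4) := by
  obtain ⟨k, rfl⟩ : ∃ k, i = k + 1 := ⟨i - 1, by omega⟩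
  rw [Nat.add_sub_cancel] at hw1 hb1 hq1 hs1 ht1
  have hg2 : ((2 * (k + 1 + 1) + 2 : ℕ) : ℕ∞) < G.egirth :=
    lt_of_lt_of_le (by exact_mod_cast (by omega : 2 * (k + 1 + 1) + 2 < g)) hg
  have hg1 : ((2 * (k + 1) + 2 : ℕ) : ℕ∞) < G.egirth :=
    lt_of_le_of_lt (by exact_mod_cast (by omega : 2 * (k + 1) + 2 ≤ 2 * (k + 1 + 1) + 2)) hg2
  have hg0 : ((2 * k + 2 : ℕ) : ℕ∞) < G.egirth :=
    lt_of_le_of_lt (by exact_mod_cast (by omega : 2 * k + 2 ≤ 2 * (k + 1) + 2)) hg1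
  obtain ⟨hapos, hcpos⟩ := ac_pos hμ hp₀ hp G r hreg u v huv k hg0
  obtain ⟨f1, f2, f3, f4, f5⟩ := closed_forms hμ hp₀ hp G r hreg u v huv k hg1 _ _ rfl rfl
  obtain ⟨f6, f7, f8, f9, f10⟩ :=
    closed_forms hμ hp₀ hp G r hreg u v huv (k + 1) hg2 _ _ rfl rfl
  rw [← hw1] at f1
  rw [← hb1] at f2
  rw [← hq1] at f3
  rw [← hs1] at f4
  rw [← ht1] at f5
  rw [← hw2] at f6
  rw [← hb2] at f7
  rw [← hq2] at f8
  rw [← hs2] at f9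
  rw [← ht2] at f10
  exact algebra_step r (r_pos G u v r hreg huv) p₀ p (by linarith [hp₀.2]) _ _ _ _
    hapos hcpos rfl rfl _ _ _ _ _ _ _ _ _ _ f1 f2 f3 f4 f5 f6 f7 f8 f9 f10

end InducedForest
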